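/- arXiv:1912.01392 — 3 statements merged into one kernel-verified Lean document; each statement's English description precedes it below -/
import Mathlib

section
/- Let (H, Δ, Δ') be a Hopf brace with antipodes S (for Δ) and T (for Δ'), and set ρ(h) = h_{(-1)} ⊗ h_{(0)} = S(h_1) h_{21'} ⊗ h_{22'}. Then for all h ∈ H: h_1 ⊗ h_2 = h_{1'} T(h_{2'(-1)}) ⊗ h_{2'(0)}, i.e. Δ(h) = (m ⊗ id)(id ⊗ (T ⊗ id)ρ)Δ'(h). -/
open TensorProduct

noncomputable section

namespace HopfPaper

/-- A Hopf algebra structure (comultiplication `Δ`, counit `ε`, antipode `S`) on a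
given `k`-algebra `H`, expressed in terms of `k`-linear maps.  Together with the
algebra structure of `H` this is exactly the data of a Hopf algebra
`(H, m, 1, Δ, ε, S)` over the field `k`. -/
structure HopfStruct (k : Type*) [Field k] (H : Type*) [Ring H] [Algebra k H] where
  /-- the comultiplication -/
  Δ : H →ₗ[k] H ⊗[k] H
  /-- the counit -/
  ε : H →ₗ[k] k
  /-- the antipode -/
  S : H →ₗ[k] H
  coassoc : ∀ h : H,
    TensorProduct.map (LinearMap.id : H →ₗ[k] H) Δ (Δ h)
      = TensorProduct.assoc k H H H
          (TensorProduct.map Δ (LinearMap.id : H →ₗ[k] H) (Δ h))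
  counit_left : ∀ h : H,
    TensorProduct.lid k H (TensorProduct.map ε (LinearMap.id : H →ₗ[k] H) (Δ h)) = h
  counit_right : ∀ h : H,
    TensorProduct.rid k H (TensorProduct.map (LinearMap.id : H →ₗ[k] H) ε (Δ h)) = h
  comul_mul : ∀ a b : H, Δ (a * b) = Δ a * Δ b
  comul_one : Δ 1 = 1
  counit_mul : ∀ a b : H, ε (a * b) = ε a * ε b
  counit_one : ε 1 = 1
  antipode_left : ∀ h : H,
    LinearMap.mul' k H (TensorProduct.map S (LinearMap.id : H →ₗ[k] H) (Δ h))
      = algebraMap k H (ε h)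
  antipode_right : ∀ h : H,
    LinearMap.mul' k H (TensorProduct.map (LinearMap.id : H →ₗ[k] H) S (Δ h))
      = algebraMap k H (ε h)

variable (k : Type*) [Field k]

/-- `m ↦ m ⊗ 1`. -/
def ι₁ (M N : Type*) [Ring M] [Algebra k M] [Ring N] [Algebra k N] :
    M →ₗ[k] M ⊗[k] N :=
  (TensorProduct.mk k M N).flip 1

/-- `n ↦ 1 ⊗ n`. -/
def ι₂ (M N : Type*) [Ring M] [Algebra k M] [Ring N] [Algebra k N] :
    N →ₗ[k] M ⊗[k] N :=
  TensorProduct.mk k M N 1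

/-- multiplication of three factors, `x ⊗ (y ⊗ z) ↦ x * y * z`. -/
def mul₃ (T : Type*) [Ring T] [Algebra k T] : T ⊗[k] (T ⊗[k] T) →ₗ[k] T :=
  (LinearMap.mul' k T).comp
    (TensorProduct.map (LinearMap.id : T →ₗ[k] T) (LinearMap.mul' k T))

/-- multiplication of four factors. -/
def mul₄ (T : Type*) [Ring T] [Algebra k T] :
    T ⊗[k] (T ⊗[k] (T ⊗[k] T)) →ₗ[k] T :=
  (LinearMap.mul' k T).comp
    (TensorProduct.map (LinearMap.id : T →ₗ[k] T) (mul₃ k T))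

/-- The left hand side `h_{1'} ⊗ h_{2'1} ⊗ h_{2'2}` of the Hopf brace compatibility
condition (2.1), i.e. `(id ⊗ Δ) ∘ Δ'`. -/
def braceLHS (H : Type*) [Ring H] [Algebra k H] (Δ Δ' : H →ₗ[k] H ⊗[k] H) :
    H →ₗ[k] H ⊗[k] (H ⊗[k] H) :=
  (TensorProduct.map (LinearMap.id : H →ₗ[k] H) Δ).comp Δ'

/-- The right hand side `h_{11'}S(h_2)h_{31'} ⊗ h_{12'} ⊗ h_{32'}` of the Hopf brace
compatibility condition (2.1):  it is obtained from the twofold comultiplication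
`h ↦ h_1 ⊗ (h_2 ⊗ h_3)` (using `Δ`) by applying `Δ'` to the first and third legs,
`S` to the middle leg, placing the results in the appropriate tensor positions of
`H ⊗ (H ⊗ H)` (filled with `1`s) and multiplying. -/
def braceRHS (H : Type*) [Ring H] [Algebra k H] (Δ Δ' : H →ₗ[k] H ⊗[k] H)
    (S : H →ₗ[k] H) : H →ₗ[k] H ⊗[k] (H ⊗[k] H) :=
  (mul₃ k (H ⊗[k] (H ⊗[k] H))).comp
    ((TensorProduct.map
        ((TensorProduct.map (LinearMap.id : H →ₗ[k] H) (ι₁ k H H)).comp Δ')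
        (TensorProduct.map ((ι₁ k H (H ⊗[k] H)).comp S)
          ((TensorProduct.map (LinearMap.id : H →ₗ[k] H) (ι₂ k H H)).comp Δ'))).comp
      ((TensorProduct.map (LinearMap.id : H →ₗ[k] H) Δ).comp Δ))

/-- A Hopf brace on the `k`-algebra `H` : two Hopf algebra structures sharing the
multiplication and unit of `H`, subject to the compatibility condition (2.1):
`h_{1'} ⊗ h_{2'1} ⊗ h_{2'2} = h_{11'}S(h_2)h_{31'} ⊗ h_{12'} ⊗ h_{32'}`. -/
structure HopfBrace (H : Type*) [Ring H] [Algebra k H] where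
  fst : HopfStruct k H
  snd : HopfStruct k H
  compat : ∀ h : H,
    braceLHS k H fst.Δ snd.Δ h = braceRHS k H fst.Δ snd.Δ fst.S h

/-- The coaction `ρ(h) = S(h_1) h_{21'} ⊗ h_{22'}` of Lemma 2.5. -/
def ρmap (H : Type*) [Ring H] [Algebra k H] (Δ Δ' : H →ₗ[k] H ⊗[k] H)
    (S : H →ₗ[k] H) : H →ₗ[k] H ⊗[k] H :=
  (LinearMap.mul' k (H ⊗[k] H)).comp
    ((TensorProduct.map ((ι₁ k H H).comp S) Δ').comp Δ)

/-- The coaction `φ(a) = (T(a_{1'}))_{(-1)} a_{2'} ⊗ (T(a_{1'}))_{(0)} a_{3'}`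
of Lemma 2.8(2), where `x_{(-1)} ⊗ x_{(0)} = ρ(x)`. -/
def φmap (H : Type*) [Ring H] [Algebra k H] (Δ Δ' : H →ₗ[k] H ⊗[k] H)
    (S T : H →ₗ[k] H) : H →ₗ[k] H ⊗[k] H :=
  (LinearMap.mul' k (H ⊗[k] H)).comp
    ((TensorProduct.map ((ρmap k H Δ Δ' S).comp T)
        (LinearMap.id : H ⊗[k] H →ₗ[k] H ⊗[k] H)).comp
      ((TensorProduct.map (LinearMap.id : H →ₗ[k] H) Δ').comp Δ'))

/-- `ρ : A →ₗ H ⊗ A` is a coassociative counital left coaction of the coalgebra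
`(H, ΔH, εH)`. -/
def LeftCoaction (A H : Type*) [Ring A] [Algebra k A] [Ring H] [Algebra k H]
    (ΔH : H →ₗ[k] H ⊗[k] H) (εH : H →ₗ[k] k) (ρ : A →ₗ[k] H ⊗[k] A) : Prop :=
  (∀ a : A,
    TensorProduct.map (LinearMap.id : H →ₗ[k] H) ρ (ρ a)
      = TensorProduct.assoc k H H A
          (TensorProduct.map ΔH (LinearMap.id : A →ₗ[k] A) (ρ a))) ∧
  (∀ a : A,
    TensorProduct.lid k A (TensorProduct.map εH (LinearMap.id : A →ₗ[k] A) (ρ a)) = a)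

/-- `φ : H →ₗ H ⊗ A` is a coassociative counital right coaction of the coalgebra
`(A, ΔA, εA)`. -/
def RightCoaction (A H : Type*) [Ring A] [Algebra k A] [Ring H] [Algebra k H]
    (ΔA : A →ₗ[k] A ⊗[k] A) (εA : A →ₗ[k] k) (φ : H →ₗ[k] H ⊗[k] A) : Prop :=
  (∀ h : H,
    TensorProduct.map (LinearMap.id : H →ₗ[k] H) ΔA (φ h)
      = TensorProduct.assoc k H A A
          (TensorProduct.map φ (LinearMap.id : A →ₗ[k] A) (φ h))) ∧
  (∀ h : H,
    TensorProduct.rid k H (TensorProduct.map (LinearMap.id : H →ₗ[k] H) εA (φ h)) = h)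

/-- a linear map which is moreover multiplicative and unital. -/
def IsAlgebraMorphism (M N : Type*) [Ring M] [Algebra k M] [Ring N] [Algebra k N]
    (f : M →ₗ[k] N) : Prop :=
  (∀ a b : M, f (a * b) = f a * f b) ∧ f 1 = 1

/-- `a ↦ a_{1(-1)} a_{2(-1)} ⊗ a_{1(0)} ⊗ a_{2(0)}`, the right hand side of the
comodule coalgebra condition. -/
def comodCoalgRHS (A H : Type*) [Ring A] [Algebra k A] [Ring H] [Algebra k H]
    (ΔA : A →ₗ[k] A ⊗[k] A) (ρ : A →ₗ[k] H ⊗[k] A) :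
    A →ₗ[k] H ⊗[k] (A ⊗[k] A) :=
  (LinearMap.mul' k (H ⊗[k] (A ⊗[k] A))).comp
    ((TensorProduct.map
        ((TensorProduct.map (LinearMap.id : H →ₗ[k] H) (ι₁ k A A)).comp ρ)
        ((TensorProduct.map (LinearMap.id : H →ₗ[k] H) (ι₂ k A A)).comp ρ)).comp ΔA)

/-- The two conditions making a left `H`-comodule `(A, ρ)` a comodule coalgebra:
`a_{(-1)} ⊗ Δ(a_{(0)}) = a_{1(-1)} a_{2(-1)} ⊗ a_{1(0)} ⊗ a_{2(0)}` and
`a_{(-1)} ε(a_{(0)}) = ε(a) 1`. -/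
def IsComodCoalg (A H : Type*) [Ring A] [Algebra k A] [Ring H] [Algebra k H]
    (ΔA : A →ₗ[k] A ⊗[k] A) (εA : A →ₗ[k] k) (ρ : A →ₗ[k] H ⊗[k] A) : Prop :=
  (∀ a : A,
    TensorProduct.map (LinearMap.id : H →ₗ[k] H) ΔA (ρ a)
      = comodCoalgRHS k A H ΔA ρ a) ∧
  (∀ a : A,
    TensorProduct.rid k H (TensorProduct.map (LinearMap.id : H →ₗ[k] H) εA (ρ a))
      = algebraMap k H (εA a))

/-- `a ↦ a_{1(-1)} a_{2(-1)[0]} ⊗ a_{1(0)} a_{2(-1)[1]} ⊗ a_{2(0)}`, the right hand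
side of (HM2). -/
def HM2RHS (A H : Type*) [Ring A] [Algebra k A] [Ring H] [Algebra k H]
    (ΔA : A →ₗ[k] A ⊗[k] A) (ρ : A →ₗ[k] H ⊗[k] A) (φ : H →ₗ[k] H ⊗[k] A) :
    A →ₗ[k] H ⊗[k] (A ⊗[k] A) :=
  (LinearMap.mul' k (H ⊗[k] (A ⊗[k] A))).comp
    ((TensorProduct.map
        ((TensorProduct.map (LinearMap.id : H →ₗ[k] H) (ι₁ k A A)).comp ρ)
        ((TensorProduct.assoc k H A A).toLinearMap.comp
          ((TensorProduct.map φ (LinearMap.id : A →ₗ[k] A)).comp ρ))).comp ΔA)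

/-- `h ↦ h_{1[0]} ⊗ h_{1[1](-1)} h_{2[0]} ⊗ h_{1[1](0)} h_{2[1]}`, the right hand
side of (HM3). -/
def HM3RHS (A H : Type*) [Ring A] [Algebra k A] [Ring H] [Algebra k H]
    (ΔH : H →ₗ[k] H ⊗[k] H) (ρ : A →ₗ[k] H ⊗[k] A) (φ : H →ₗ[k] H ⊗[k] A) :
    H →ₗ[k] H ⊗[k] (H ⊗[k] A) :=
  (LinearMap.mul' k (H ⊗[k] (H ⊗[k] A))).comp
    ((TensorProduct.map
        ((TensorProduct.map (LinearMap.id : H →ₗ[k] H) ρ).comp φ)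
        ((ι₂ k H (H ⊗[k] A)).comp φ)).comp ΔH)

/-- A Hopf matched pair `(A, H)` (Definition 3.1): `ρ` makes `A` a left
`H`-comodule algebra, `φ` makes `H` a right `A`-comodule algebra, and the
compatibility conditions (HM1)–(HM4) hold. -/
def IsHopfMatchedPair (A H : Type*) [Ring A] [Algebra k A] [Ring H] [Algebra k H]
    (ΔA : A →ₗ[k] A ⊗[k] A) (εA : A →ₗ[k] k)
    (ΔH : H →ₗ[k] H ⊗[k] H) (εH : H →ₗ[k] k)
    (ρ : A →ₗ[k] H ⊗[k] A) (φ : H →ₗ[k] H ⊗[k] A) : Prop :=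
  LeftCoaction k A H ΔH εH ρ ∧
  IsAlgebraMorphism k A (H ⊗[k] A) ρ ∧
  RightCoaction k A H ΔA εA φ ∧
  IsAlgebraMorphism k H (H ⊗[k] A) φ ∧
  -- (HM1)
  (∀ a : A,
    TensorProduct.rid k H (TensorProduct.map (LinearMap.id : H →ₗ[k] H) εA (ρ a))
      = algebraMap k H (εA a)) ∧
  (∀ h : H,
    TensorProduct.lid k A (TensorProduct.map εH (LinearMap.id : A →ₗ[k] A) (φ h))
      = algebraMap k A (εH h)) ∧
  -- (HM2)
  (∀ a : A,
    TensorProduct.map (LinearMap.id : H →ₗ[k] H) ΔA (ρ a) = HM2RHS k A H ΔA ρ φ a) ∧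
  -- (HM3)
  (∀ h : H,
    TensorProduct.assoc k H H A
        (TensorProduct.map ΔH (LinearMap.id : A →ₗ[k] A) (φ h))
      = HM3RHS k A H ΔH ρ φ h) ∧
  -- (HM4)
  (∀ (a : A) (h : H), φ h * ρ a = ρ a * φ h)

/-- Equation (3.2): `Δ(a) = a_{1'} T(a_{2'(-1)}) ⊗ a_{2'(0)}`. -/
def Δfromρ (A : Type*) [Ring A] [Algebra k A] (Δ' : A →ₗ[k] A ⊗[k] A)
    (T : A →ₗ[k] A) (ρ : A →ₗ[k] A ⊗[k] A) : A →ₗ[k] A ⊗[k] A :=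
  (LinearMap.mul' k (A ⊗[k] A)).comp
    ((TensorProduct.map (ι₁ k A A)
        ((TensorProduct.map T (LinearMap.id : A →ₗ[k] A)).comp ρ)).comp Δ')

/-- Equation (3.3): `S(a) = a_{(-1)} T(a_{(0)})`. -/
def Sfromρ (A : Type*) [Ring A] [Algebra k A] (T : A →ₗ[k] A)
    (ρ : A →ₗ[k] A ⊗[k] A) : A →ₗ[k] A :=
  (LinearMap.mul' k A).comp
    ((TensorProduct.map (LinearMap.id : A →ₗ[k] A) T).comp ρ)

/-- The comultiplication `Δ_R(h) = R · Δ(h) · R⁻¹` obtained by conjugating `Δ` with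
an invertible element `R ∈ H ⊗ H`. -/
def conjComul (H : Type*) [Ring H] [Algebra k H] (R Rinv : H ⊗[k] H)
    (Δ : H →ₗ[k] H ⊗[k] H) : H →ₗ[k] H ⊗[k] H :=
  (LinearMap.mulLeft k R).comp ((LinearMap.mulRight k Rinv).comp Δ)

/-- The braiding candidate `c(x ⊗ y) = x_{(-1)} y_{[0]} ⊗ x_{(0)} y_{[1]}` of
Proposition 2.9, i.e. `c = mult ∘ (ρ ⊗ φ)`. -/
def cmap (A : Type*) [Ring A] [Algebra k A] (Δ Δ' : A →ₗ[k] A ⊗[k] A)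
    (S T : A →ₗ[k] A) : A ⊗[k] A →ₗ[k] A ⊗[k] A :=
  (LinearMap.mul' k (A ⊗[k] A)).comp
    (TensorProduct.map (ρmap k A Δ Δ' S) (φmap k A Δ Δ' S T))

/-- `γ(x ⊗ y) = x y_{(-1)} ⊗ y_{(0)}` for a coaction `ρ(y) = y_{(-1)} ⊗ y_{(0)}`. -/
def γmap (A : Type*) [Ring A] [Algebra k A] (ρ : A →ₗ[k] A ⊗[k] A) :
    A ⊗[k] A →ₗ[k] A ⊗[k] A :=
  (LinearMap.mul' k (A ⊗[k] A)).comp (TensorProduct.map (ι₁ k A A) ρ)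

/-- `σ(x ⊗ y) = y_2 ⊗ x S(y_1) y_3`. -/
def σmap (A : Type*) [Ring A] [Algebra k A] (Δ : A →ₗ[k] A ⊗[k] A)
    (S : A →ₗ[k] A) : A ⊗[k] A →ₗ[k] A ⊗[k] A :=
  (mul₄ k (A ⊗[k] A)).comp
    ((TensorProduct.map (ι₂ k A A)
        (TensorProduct.map ((ι₂ k A A).comp S)
          (TensorProduct.map (ι₁ k A A) (ι₂ k A A)))).comp
      (TensorProduct.map (LinearMap.id : A →ₗ[k] A)
        ((TensorProduct.map (LinearMap.id : A →ₗ[k] A) Δ).comp Δ)))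

/-- The usual tensor product comultiplication `Δ̂` on `A ⊗ H`:
`a ⊗ h ↦ (a_1 ⊗ h_1) ⊗ (a_2 ⊗ h_2)`. -/
def hatΔ (A H : Type*) [Ring A] [Algebra k A] [Ring H] [Algebra k H]
    (ΔA : A →ₗ[k] A ⊗[k] A) (ΔH : H →ₗ[k] H ⊗[k] H) :
    A ⊗[k] H →ₗ[k] (A ⊗[k] H) ⊗[k] (A ⊗[k] H) :=
  (TensorProduct.tensorTensorTensorComm k A A H H).toLinearMap.comp
    (TensorProduct.map ΔA ΔH)

/-- The bicrossed coproduct comultiplication on `A ⊗ H`: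
`Δ̃(a ⊗ h) = a_1 ⊗ a_{2(-1)} h_{1[0]} ⊗ a_{2(0)} h_{1[1]} ⊗ h_2`. -/
def bicrossΔ (A H : Type*) [Ring A] [Algebra k A] [Ring H] [Algebra k H]
    (ΔA : A →ₗ[k] A ⊗[k] A) (ΔH : H →ₗ[k] H ⊗[k] H)
    (ρ : A →ₗ[k] H ⊗[k] A) (φ : H →ₗ[k] H ⊗[k] A) :
    A ⊗[k] H →ₗ[k] (A ⊗[k] H) ⊗[k] (A ⊗[k] H) :=
  (LinearMap.mul' k ((A ⊗[k] H) ⊗[k] (A ⊗[k] H))).comp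
    (TensorProduct.map
      -- a ↦ (a_1 ⊗ a_{2(-1)}) ⊗ (a_{2(0)} ⊗ 1)
      ((TensorProduct.map (LinearMap.id : A ⊗[k] H →ₗ[k] A ⊗[k] H) (ι₁ k A H)).comp
        ((TensorProduct.assoc k A H A).symm.toLinearMap.comp
          ((TensorProduct.map (LinearMap.id : A →ₗ[k] A) ρ).comp ΔA)))
      -- h ↦ (1 ⊗ h_{1[0]}) ⊗ (h_{1[1]} ⊗ h_2)
      ((TensorProduct.map (ι₂ k A H) (LinearMap.id : A ⊗[k] H →ₗ[k] A ⊗[k] H)).comp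
        ((TensorProduct.assoc k H A H).toLinearMap.comp
          ((TensorProduct.map φ (LinearMap.id : H →ₗ[k] H)).comp ΔH))))

/-- The antipode of the bicrossed coproduct:
`S̃(a ⊗ h) = S_A(h_{[1]}) S_A(a_{(0)}) ⊗ S_H(h_{[0]}) S_H(a_{(-1)})`. -/
def bicrossS (A H : Type*) [Ring A] [Algebra k A] [Ring H] [Algebra k H]
    (SA : A →ₗ[k] A) (SH : H →ₗ[k] H)
    (ρ : A →ₗ[k] H ⊗[k] A) (φ : H →ₗ[k] H ⊗[k] A) :
    A ⊗[k] H →ₗ[k] A ⊗[k] H :=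
  (LinearMap.mul' k (A ⊗[k] H)).comp
    ((TensorProduct.map
        ((TensorProduct.map SA SH).comp ((TensorProduct.comm k H A).toLinearMap.comp φ))
        ((TensorProduct.map SA SH).comp ((TensorProduct.comm k H A).toLinearMap.comp ρ))).comp
      (TensorProduct.comm k A H).toLinearMap)

/-- The left hand side `h_{[0]} ⊗ h_{[1]1} ⊗ h_{[1]2}` of equation (4.1), where the
`A`-leg is comultiplied with `Δ'`. -/
def eq41LHS (A H : Type*) [Ring A] [Algebra k A] [Ring H] [Algebra k H]
    (Δ'A : A →ₗ[k] A ⊗[k] A) (φ : H →ₗ[k] H ⊗[k] A) :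
    H →ₗ[k] H ⊗[k] (A ⊗[k] A) :=
  (TensorProduct.map (LinearMap.id : H →ₗ[k] H) Δ'A).comp φ

/-- The right hand side `h_{1[0]} S(h_2) h_{3[0]} ⊗ h_{1[1]} ⊗ h_{3[1]}` of
equation (4.1). -/
def eq41RHS (A H : Type*) [Ring A] [Algebra k A] [Ring H] [Algebra k H]
    (ΔH : H →ₗ[k] H ⊗[k] H) (SH : H →ₗ[k] H) (φ : H →ₗ[k] H ⊗[k] A) :
    H →ₗ[k] H ⊗[k] (A ⊗[k] A) :=
  (mul₃ k (H ⊗[k] (A ⊗[k] A))).comp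
    ((TensorProduct.map
        ((TensorProduct.map (LinearMap.id : H →ₗ[k] H) (ι₁ k A A)).comp φ)
        (TensorProduct.map ((ι₁ k H (A ⊗[k] A)).comp SH)
          ((TensorProduct.map (LinearMap.id : H →ₗ[k] H) (ι₂ k A A)).comp φ))).comp
      ((TensorProduct.map (LinearMap.id : H →ₗ[k] H) ΔH).comp ΔH))

/-- `x ↦ x_{11'} S(x_2) ⊗ x_{12'} ⊗ 1 ∈ H ⊗ (H ⊗ A)`, an auxiliary map for
equations (4.2) and (4.3). -/
def LHmap (A H : Type*) [Ring A] [Algebra k A] [Ring H] [Algebra k H]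
    (ΔH Δ'H : H →ₗ[k] H ⊗[k] H) (SH : H →ₗ[k] H) :
    H →ₗ[k] H ⊗[k] (H ⊗[k] A) :=
  (LinearMap.mul' k (H ⊗[k] (H ⊗[k] A))).comp
    ((TensorProduct.map
        ((TensorProduct.map (LinearMap.id : H →ₗ[k] H) (ι₁ k H A)).comp Δ'H)
        ((ι₁ k H (H ⊗[k] A)).comp SH)).comp ΔH)

/-- The right hand side
`a_{(-1)11'} S(a_{(-1)2}) a_{(0)(-1)'} ⊗ a_{(-1)12'} ⊗ a_{(0)(0)'}` of
equation (4.2). -/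
def eq42RHS (A H : Type*) [Ring A] [Algebra k A] [Ring H] [Algebra k H]
    (ΔH Δ'H : H →ₗ[k] H ⊗[k] H) (SH : H →ₗ[k] H)
    (ρ ρ' : A →ₗ[k] H ⊗[k] A) :
    A →ₗ[k] H ⊗[k] (H ⊗[k] A) :=
  (LinearMap.mul' k (H ⊗[k] (H ⊗[k] A))).comp
    ((TensorProduct.map (LHmap k A H ΔH Δ'H SH)
        ((TensorProduct.map (LinearMap.id : H →ₗ[k] H) (ι₂ k H A)).comp ρ')).comp ρ)

/-- The right hand side
`h_{1[0]11'} S(h_{1[0]2}) h_{1[1](-1)'} h_2 ⊗ h_{1[0]12'} ⊗ h_{1[1](0)'}` of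
equation (4.3). -/
def eq43RHS (A H : Type*) [Ring A] [Algebra k A] [Ring H] [Algebra k H]
    (ΔH Δ'H : H →ₗ[k] H ⊗[k] H) (SH : H →ₗ[k] H)
    (ρ' : A →ₗ[k] H ⊗[k] A) (φ : H →ₗ[k] H ⊗[k] A) :
    H →ₗ[k] H ⊗[k] (H ⊗[k] A) :=
  (LinearMap.mul' k (H ⊗[k] (H ⊗[k] A))).comp
    ((TensorProduct.map
        ((LinearMap.mul' k (H ⊗[k] (H ⊗[k] A))).comp
          ((TensorProduct.map (LHmap k A H ΔH Δ'H SH)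
              ((TensorProduct.map (LinearMap.id : H →ₗ[k] H) (ι₂ k H A)).comp ρ')).comp φ))
        (ι₁ k H (H ⊗[k] A))).comp ΔH)

section Convolution

variable {k : Type*} [Field k] {H : Type*} [Ring H] [Algebra k H]
variable {B C : Type*} [Ring B] [Algebra k B] [Ring C] [Algebra k C]

/-- The convolution product `h ↦ f(h_1) g(h_2)` with respect to a comultiplication `Δ`. -/
def conv (Δ : H →ₗ[k] H ⊗[k] H) (f g : H →ₗ[k] B) : H →ₗ[k] B :=
  (LinearMap.mul' k B).comp ((TensorProduct.map f g).comp Δ)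

/-- The unit `h ↦ ε(h) 1` of the convolution product. -/
def convUnit (B : Type*) [Ring B] [Algebra k B] (ε : H →ₗ[k] k) : H →ₗ[k] B :=
  (Algebra.linearMap k B).comp ε

/-- A linear map sending each product `f x * g y` to `f' x * g' y` sends the convolution
product of `f` and `g` to that of `f'` and `g'`. -/
lemma comp_conv (Δ : H →ₗ[k] H ⊗[k] H) (P : B →ₗ[k] C) {f g : H →ₗ[k] B}
    {f' g' : H →ₗ[k] C} (hP : ∀ x y, P (f x * g y) = f' x * g' y) :
    P.comp (conv Δ f g) = conv Δ f' g' := by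
  have key : P.comp ((LinearMap.mul' k B).comp (TensorProduct.map f g))
      = (LinearMap.mul' k C).comp (TensorProduct.map f' g') := by
    ext x y
    simpa using hP x y
  ext h
  exact LinearMap.congr_fun key (Δ h)

lemma conv_conv_eq (Δ : H →ₗ[k] H ⊗[k] H) (f g l : H →ₗ[k] B) :
    conv Δ f (conv Δ g l)
      = ((mul₃ k B).comp (TensorProduct.map f (TensorProduct.map g l))).comp
          ((TensorProduct.map LinearMap.id Δ).comp Δ) := by
  have key : (LinearMap.mul' k B).comp (TensorProduct.map f (conv Δ g l))
      = ((mul₃ k B).comp (TensorProduct.map f (TensorProduct.map g l))).comp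
          (TensorProduct.map LinearMap.id Δ) := by
    ext x y
    simp [mul₃, conv]
  ext h
  exact LinearMap.congr_fun key (Δ h)

/-- The analogue of `comp_conv` for threefold convolution products. -/
lemma comp_conv_conv (Δ : H →ₗ[k] H ⊗[k] H) (P : B →ₗ[k] C) {f g l : H →ₗ[k] B}
    {f' g' l' : H →ₗ[k] C}
    (hP : ∀ x y z, P (f x * (g y * l z)) = f' x * (g' y * l' z)) :
    P.comp (conv Δ f (conv Δ g l)) = conv Δ f' (conv Δ g' l') := by
  have key : P.comp ((mul₃ k B).comp (TensorProduct.map f (TensorProduct.map g l)))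
      = (mul₃ k C).comp (TensorProduct.map f' (TensorProduct.map g' l')) := by
    ext x y z
    simpa [mul₃] using hP x y z
  rw [conv_conv_eq, conv_conv_eq, ← LinearMap.comp_assoc, key]

lemma HopfStruct.conv_assoc (A : HopfStruct k H) (f g l : H →ₗ[k] B) :
    conv A.Δ (conv A.Δ f g) l = conv A.Δ f (conv A.Δ g l) := by
  have key : (LinearMap.mul' k B).comp (TensorProduct.map (conv A.Δ f g) l)
      = (((mul₃ k B).comp (TensorProduct.map f (TensorProduct.map g l))).comp
          (TensorProduct.assoc k H H H).toLinearMap).comp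
            (TensorProduct.map A.Δ LinearMap.id) := by
    ext x y
    simp only [conv, TensorProduct.AlgebraTensorModule.curry_apply, LinearMap.restrictScalars_self,
      TensorProduct.curry_apply, LinearMap.comp_apply, TensorProduct.map_tmul, LinearMap.id_apply]
    induction A.Δ x with
    | zero => simp
    | tmul a b => simp [mul₃, mul_assoc]
    | add a b ha hb => simp only [map_add, TensorProduct.add_tmul, ha, hb]
  rw [conv_conv_eq]
  ext h
  have := LinearMap.congr_fun key (A.Δ h)
  simp only [LinearMap.comp_apply, LinearEquiv.coe_coe] at this ⊢
  rw [A.coassoc, ← this]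
  rfl

lemma HopfStruct.unit_conv (A : HopfStruct k H) (f : H →ₗ[k] B) :
    conv A.Δ (convUnit B A.ε) f = f := by
  have key : (LinearMap.mul' k B).comp (TensorProduct.map (convUnit B A.ε) f)
      = f.comp ((TensorProduct.lid k H).toLinearMap.comp
          (TensorProduct.map A.ε LinearMap.id)) := by
    ext x y
    simp [convUnit, Algebra.algebraMap_eq_smul_one]
  ext h
  have := LinearMap.congr_fun key (A.Δ h)
  simp only [LinearMap.comp_apply, LinearEquiv.coe_coe, A.counit_left] at this
  exact this

lemma HopfStruct.conv_unit (A : HopfStruct k H) (f : H →ₗ[k] B) :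
    conv A.Δ f (convUnit B A.ε) = f := by
  have key : (LinearMap.mul' k B).comp (TensorProduct.map f (convUnit B A.ε))
      = f.comp ((TensorProduct.rid k H).toLinearMap.comp
          (TensorProduct.map LinearMap.id A.ε)) := by
    ext x y
    simp [convUnit, Algebra.algebraMap_eq_smul_one]
  ext h
  have := LinearMap.congr_fun key (A.Δ h)
  simp only [LinearMap.comp_apply, LinearEquiv.coe_coe, A.counit_right] at this
  exact this

/-- For a multiplicative unital map `f`, the map `f ∘ S` is a left convolution inverse of `f`. -/
lemma HopfStruct.conv_comp_antipode_left (A : HopfStruct k H) {f : H →ₗ[k] B}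
    (hf : IsAlgebraMorphism k H B f) :
    conv A.Δ (f.comp A.S) f = convUnit B A.ε := by
  have := comp_conv A.Δ f (f := A.S) (g := LinearMap.id) (f' := f.comp A.S) (g' := f)
    fun x y => hf.1 _ _
  rw [← this]
  ext h
  have := A.antipode_left h
  simp only [conv, convUnit, LinearMap.comp_apply, this]
  simp [Algebra.algebraMap_eq_smul_one, hf.2]

/-- For a multiplicative unital map `f`, the map `f ∘ S` is a right convolution inverse of `f`. -/
lemma HopfStruct.conv_comp_antipode_right (A : HopfStruct k H) {f : H →ₗ[k] B}
    (hf : IsAlgebraMorphism k H B f) :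
    conv A.Δ f (f.comp A.S) = convUnit B A.ε := by
  have := comp_conv A.Δ f (f := LinearMap.id) (g := A.S) (f' := f) (g' := f.comp A.S)
    fun x y => hf.1 _ _
  rw [← this]
  ext h
  have := A.antipode_right h
  simp only [conv, convUnit, LinearMap.comp_apply, this]
  simp [Algebra.algebraMap_eq_smul_one, hf.2]

lemma isAlgebraMorphism_ι₁ : IsAlgebraMorphism k B (B ⊗[k] C) (ι₁ k B C) :=
  ⟨fun a b => by simp [ι₁], by simp [ι₁, Algebra.TensorProduct.one_def]⟩

lemma isAlgebraMorphism_id_map {N : Type*} [Ring N] [Algebra k N] {f : B →ₗ[k] C}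
    (hf : IsAlgebraMorphism k B C f) :
    IsAlgebraMorphism k (N ⊗[k] B) (N ⊗[k] C) (TensorProduct.map LinearMap.id f) := by
  refine ⟨fun a b => ?_, by simp [Algebra.TensorProduct.one_def, hf.2]⟩
  induction a with
  | zero => simp
  | add a a' ha ha' => simp only [add_mul, map_add, ha, ha']
  | tmul x y =>
    induction b with
    | zero => simp
    | add b b' hb hb' => simp only [mul_add, map_add, hb, hb']
    | tmul z w => simp [hf.1]

/-- The compatibility condition of a Hopf brace, with the second and third legs composed with
`f` and `g` and then multiplied. -/
lemma HopfBrace.map_conv_comul (HB : HopfBrace k H) (f g : H →ₗ[k] C) :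
    (TensorProduct.map LinearMap.id (conv HB.fst.Δ f g)).comp HB.snd.Δ
      = conv HB.fst.Δ ((TensorProduct.map LinearMap.id f).comp HB.snd.Δ)
          (conv HB.fst.Δ ((ι₁ k H C).comp HB.fst.S)
            ((TensorProduct.map LinearMap.id g).comp HB.snd.Δ)) := by
  let P : H ⊗[k] (H ⊗[k] H) →ₗ[k] H ⊗[k] C :=
    TensorProduct.map LinearMap.id ((LinearMap.mul' k C).comp (TensorProduct.map f g))
  have hcompat : braceLHS k H HB.fst.Δ HB.snd.Δ = braceRHS k H HB.fst.Δ HB.snd.Δ HB.fst.S :=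
    LinearMap.ext HB.compat
  rw [braceRHS, ← LinearMap.comp_assoc, ← conv_conv_eq] at hcompat
  have hL : (TensorProduct.map LinearMap.id (conv HB.fst.Δ f g)).comp HB.snd.Δ
      = P.comp (braceLHS k H HB.fst.Δ HB.snd.Δ) := by
    simp only [P, braceLHS, ← LinearMap.comp_assoc, ← TensorProduct.map_comp, LinearMap.id_comp]
    rfl
  rw [hL, hcompat]
  refine comp_conv_conv _ _ fun x y z => ?_
  simp only [LinearMap.comp_apply]
  induction HB.snd.Δ x with
  | zero => simp
  | add a a' ha ha' => simp only [add_mul, map_add, ha, ha']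
  | tmul a b =>
    induction HB.snd.Δ z with
    | zero => simp
    | add c c' hc hc' => simp only [mul_add, map_add, hc, hc']
    | tmul c d => simp [P, ι₁, ι₂]

lemma HopfStruct.isAlgebraMorphism_counit (A : HopfStruct k H) :
    IsAlgebraMorphism k H k A.ε :=
  ⟨A.counit_mul, A.counit_one⟩

lemma convUnit_self (ε : H →ₗ[k] k) : convUnit k ε = ε := by
  ext; simp [convUnit]

lemma HopfBrace.snd_counit_comp_fst_antipode (HB : HopfBrace k H) :
    HB.snd.ε.comp HB.fst.S = HB.fst.ε := by
  let Q : H ⊗[k] k →ₗ[k] k :=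
    (TensorProduct.lid k k).toLinearMap.comp (TensorProduct.map HB.snd.ε LinearMap.id)
  have hQ : Q.comp ((TensorProduct.map LinearMap.id HB.fst.ε).comp HB.snd.Δ) = HB.fst.ε := by
    have key : Q.comp (TensorProduct.map LinearMap.id HB.fst.ε)
        = HB.fst.ε.comp ((TensorProduct.lid k H).toLinearMap.comp
            (TensorProduct.map HB.snd.ε LinearMap.id)) := by
      ext x y
      simp [Q]
    rw [← LinearMap.comp_assoc, key]
    ext h
    exact congrArg HB.fst.ε (HB.snd.counit_left h)
  have hmul (a b : H ⊗[k] k) : Q (a * b) = Q a * Q b := by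
    induction a with
    | zero => simp
    | add a a' ha ha' => simp only [add_mul, map_add, ha, ha']
    | tmul x y =>
      induction b with
      | zero => simp
      | add b b' hb hb' => simp only [mul_add, map_add, hb, hb']
      | tmul z w => simp [Q, HB.snd.counit_mul, mul_mul_mul_comm]
  have hconv := congrArg Q.comp (HB.map_conv_comul HB.fst.ε HB.fst.ε)
  have hunit (f : H →ₗ[k] k) : conv HB.fst.Δ HB.fst.ε f = f := by
    simpa [convUnit_self] using HB.fst.unit_conv f
  have hunit' (f : H →ₗ[k] k) : conv HB.fst.Δ f HB.fst.ε = f := by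
    simpa [convUnit_self] using HB.fst.conv_unit f
  rw [hunit, hQ, comp_conv_conv (f' := HB.fst.ε) (g' := HB.snd.ε.comp HB.fst.S)
    (l' := HB.fst.ε), hunit, hunit'] at hconv
  · exact hconv.symm
  · intro x y z
    have hx := LinearMap.congr_fun hQ x
    have hz := LinearMap.congr_fun hQ z
    rw [hmul, hmul]
    rw [LinearMap.comp_apply] at hx hz
    rw [hx, hz]
    simp [Q, ι₁]

lemma HopfBrace.counit_eq (HB : HopfBrace k H) : HB.fst.ε = HB.snd.ε := by
  have h := HB.fst.conv_comp_antipode_left HB.snd.isAlgebraMorphism_counit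
  have hunit := HB.fst.unit_conv HB.snd.ε
  rw [convUnit_self] at h hunit
  rw [← h, HB.snd_counit_comp_fst_antipode, hunit]

/-- With `ρ` the coaction of a Hopf brace,
`h_{1'} ⊗ ρ(h_{2'}) = h_1 S(h_2)_{1'} h_{31'} ⊗ S(h_2)_{2'} h_{32'} ⊗ h_{33'}`. -/
lemma HopfBrace.map_ρmap_comul (HB : HopfBrace k H) :
    (TensorProduct.map LinearMap.id (ρmap k H HB.fst.Δ HB.snd.Δ HB.fst.S)).comp HB.snd.Δ
      = conv HB.fst.Δ (ι₁ k H (H ⊗[k] H))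
          (conv HB.fst.Δ
            (((TensorProduct.map LinearMap.id (ι₁ k H H)).comp HB.snd.Δ).comp HB.fst.S)
            ((TensorProduct.map LinearMap.id HB.snd.Δ).comp HB.snd.Δ)) := by
  have hd : IsAlgebraMorphism k H (H ⊗[k] (H ⊗[k] H))
      ((TensorProduct.map LinearMap.id (ι₁ k H H)).comp HB.snd.Δ) := by
    obtain ⟨h₁, h₂⟩ := isAlgebraMorphism_id_map (N := H)
      (isAlgebraMorphism_ι₁ (k := k) (B := H) (C := H))
    exact ⟨fun a b => by simp only [LinearMap.comp_apply, HB.snd.comul_mul, h₁],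
      by simp only [LinearMap.comp_apply, HB.snd.comul_one, h₂]⟩
  have hι : (TensorProduct.map LinearMap.id (convUnit (H ⊗[k] H) HB.fst.ε)).comp HB.snd.Δ
      = ι₁ k H (H ⊗[k] H) := by
    have key : TensorProduct.map LinearMap.id (convUnit (H ⊗[k] H) HB.snd.ε)
        = (ι₁ k H (H ⊗[k] H)).comp ((TensorProduct.rid k H).toLinearMap.comp
            (TensorProduct.map LinearMap.id HB.snd.ε)) := by
      ext x y
      simp [ι₁, convUnit, Algebra.algebraMap_eq_smul_one, TensorProduct.smul_tmul']
    rw [HB.counit_eq, key]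
    ext h
    exact congrArg (ι₁ k H (H ⊗[k] H)) (HB.snd.counit_right h)
  have hinv := HB.map_conv_comul ((ι₁ k H H).comp HB.fst.S) (ι₁ k H H)
  rw [HB.fst.conv_comp_antipode_left isAlgebraMorphism_ι₁, hι] at hinv
  have hρ := HB.map_conv_comul ((ι₁ k H H).comp HB.fst.S) HB.snd.Δ
  rw [← HB.fst.conv_assoc] at hinv hρ
  rw [← HB.fst.conv_assoc, hinv, HB.fst.conv_assoc _ _ (LinearMap.comp _ HB.fst.S),
    HB.fst.conv_comp_antipode_right hd, HB.fst.conv_unit, ← hρ]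
  rfl

lemma conv_ι₁_ι₂ (Δ : H →ₗ[k] H ⊗[k] H) : conv Δ (ι₁ k H H) (ι₂ k H H) = Δ := by
  have key : (LinearMap.mul' k (H ⊗[k] H)).comp (TensorProduct.map (ι₁ k H H) (ι₂ k H H))
      = LinearMap.id := by
    ext x y
    simp [ι₁, ι₂]
  ext h
  exact LinearMap.congr_fun key (Δ h)

/-- If `x ⊗ y ⊗ z ↦ x T(y) ⊗ z`, then `x a_{1'} b_{1'} ⊗ a_{2'} b_{2'} ⊗ b_{3'}` is sent to
`ε'(a) x ⊗ b`. -/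
lemma HopfStruct.mul_antipode_comul_mul (A : HopfStruct k H) (x a b : H) :
    LinearMap.mul' k (H ⊗[k] H)
        (TensorProduct.map (ι₁ k H H) (TensorProduct.map A.S LinearMap.id)
          (ι₁ k H (H ⊗[k] H) x * (TensorProduct.map LinearMap.id (ι₁ k H H) (A.Δ a) *
            TensorProduct.map LinearMap.id A.Δ (A.Δ b))))
      = A.ε a • (x ⊗ₜ[k] b) := by
  have hprod (w w' : H ⊗[k] H) (q : H) :
      TensorProduct.map LinearMap.id (ι₁ k H H) w * TensorProduct.assoc k H H H (w' ⊗ₜ q)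
        = TensorProduct.assoc k H H H ((w * w') ⊗ₜ q) := by
    induction w with
    | zero => simp
    | add w v hw hv => simp only [add_mul, map_add, hw, hv, TensorProduct.add_tmul]
    | tmul c d =>
      induction w' with
      | zero => simp
      | add w v hw hv => simp only [mul_add, map_add, hw, hv, TensorProduct.add_tmul]
      | tmul e f => simp [ι₁]
  have hmul (w : H ⊗[k] H) (q : H) :
      LinearMap.mul' k (H ⊗[k] H)
          (TensorProduct.map (ι₁ k H H) (TensorProduct.map A.S LinearMap.id)
            (ι₁ k H (H ⊗[k] H) x * TensorProduct.assoc k H H H (w ⊗ₜ q)))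
        = (x * LinearMap.mul' k H (TensorProduct.map LinearMap.id A.S w)) ⊗ₜ q := by
    induction w with
    | zero => simp
    | add w v hw hv => simp only [mul_add, map_add, hw, hv, TensorProduct.add_tmul]
    | tmul c d => simp [ι₁, mul_assoc]
  rw [A.coassoc]
  conv_rhs => rw [← A.counit_left b]
  induction A.Δ b with
  | zero => simp
  | add w v hw hv => simp only [mul_add, map_add, hw, hv, TensorProduct.tmul_add, smul_add]
  | tmul p q =>
    rw [TensorProduct.map_tmul, LinearMap.id_apply, hprod, ← A.comul_mul, hmul, A.antipode_right]
    simp [Algebra.algebraMap_eq_smul_one, A.counit_mul, TensorProduct.smul_tmul', smul_smul]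

end Convolution

/-- Remark 2.6, equation (2.5).  For a Hopf brace `(H, Δ, Δ')`
with antipodes `S` (for `Δ`) and `T` (for `Δ'`) and
`ρ(h) = S(h_1) h_{21'} ⊗ h_{22'}`, one has
`h_1 ⊗ h_2 = h_{1'} T(h_{2'(-1)}) ⊗ h_{2'(0)}`, i.e.
`Δ = (m ⊗ id) ∘ (id ⊗ (T ⊗ id) ∘ ρ) ∘ Δ'`. -/
theorem remark_2_6_eq_2_5 {k : Type*} [Field k] {H : Type*} [Ring H] [Algebra k H]
    (HB : HopfBrace k H) :
    ∀ h : H,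
      HB.fst.Δ h
        = Δfromρ k H HB.snd.Δ HB.snd.S
            (ρmap k H HB.fst.Δ HB.snd.Δ HB.fst.S) h := by
  intro h
  let K : H ⊗[k] (H ⊗[k] H) →ₗ[k] H ⊗[k] H :=
    (LinearMap.mul' k (H ⊗[k] H)).comp
      (TensorProduct.map (ι₁ k H H) (TensorProduct.map HB.snd.S LinearMap.id))
  have hK : Δfromρ k H HB.snd.Δ HB.snd.S (ρmap k H HB.fst.Δ HB.snd.Δ HB.fst.S)
      = K.comp ((TensorProduct.map LinearMap.id
          (ρmap k H HB.fst.Δ HB.snd.Δ HB.fst.S)).comp HB.snd.Δ) := by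
    have hmap : TensorProduct.map (ι₁ k H H) ((TensorProduct.map HB.snd.S LinearMap.id).comp
          (ρmap k H HB.fst.Δ HB.snd.Δ HB.fst.S))
        = (TensorProduct.map (ι₁ k H H) (TensorProduct.map HB.snd.S LinearMap.id)).comp
          (TensorProduct.map LinearMap.id (ρmap k H HB.fst.Δ HB.snd.Δ HB.fst.S)) := by
      rw [← TensorProduct.map_comp, LinearMap.comp_id]
    rw [Δfromρ, hmap]
    rfl
  rw [hK, HB.map_ρmap_comul, comp_conv_conv (f' := ι₁ k H H)
    (g' := convUnit (H ⊗[k] H) HB.fst.ε) (l' := ι₂ k H H), HB.fst.unit_conv, conv_ι₁_ι₂]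
  intro x y z
  have hε : HB.snd.ε (HB.fst.S y) = HB.fst.ε y :=
    LinearMap.congr_fun HB.snd_counit_comp_fst_antipode y
  refine (HB.snd.mul_antipode_comul_mul x (HB.fst.S y) z).trans ?_
  rw [hε]
  simp [convUnit, ι₁, ι₂, Algebra.algebraMap_eq_smul_one]

end HopfPaper
end
end

section
/- Let (A, Δ, Δ') be a commutative Hopf brace with antipodes S (for Δ) and T (for Δ'), and write ρ(a) = a_{(-1)} ⊗ a_{(0)} = S(a_1) a_{21'} ⊗ a_{22'}. Then the map φ: A → A ⊗ A defined by φ(a) = a_{[0]} ⊗ a_{[1]} = (T(a_{1'}))_{(-1)} a_{2'} ⊗ (T(a_{1'}))_{(0)} a_{3'} makes A a right comodule algebra over (A, Δ'): (φ ⊗ id)φ = (id ⊗ Δ')φ, (id ⊗ ε)φ = id, and φ is an algebra homomorphism. -/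
open TensorProduct

noncomputable section

namespace HopfPaper

variable (k : Type*) [Field k]

section SkewBrace

variable {G : Type*} [Group G] [AddGroup G]

theorem SkewBrace.one_eq_zero (h : ∀ a b c : G, a * (b + c) = a * b + (-a + a * c)) :
    (1 : G) = 0 := by
  have h₀ := h 1 0 0
  simp only [add_zero, one_mul, zero_add] at h₀
  exact neg_eq_zero.mp h₀.symm

theorem SkewBrace.lambda_mul (h : ∀ a b c : G, a * (b + c) = a * b + (-a + a * c)) (a b c : G) :
    -(a * b) + a * b * c = -a + a * (-b + b * c) := by
  have h₁ := h a b (-b + b * c)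
  rw [add_neg_cancel_left, ← mul_assoc] at h₁
  rw [h₁, neg_add_cancel_left]

/-- The second component `a ↦ (λ_a(b))⁻¹ a b` of the braiding of a skew brace is a right action. -/
theorem SkewBrace.tau_mul (h : ∀ a b c : G, a * (b + c) = a * b + (-a + a * c)) (a b c : G) :
    (-a + a * (b * c))⁻¹ * (a * (b * c)) =
      (-((-a + a * b)⁻¹ * (a * b)) + (-a + a * b)⁻¹ * (a * b) * c)⁻¹ *
        ((-a + a * b)⁻¹ * (a * b) * c) := by
  set l := -a + a * b with hl
  set t := l⁻¹ * (a * b) with ht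
  have hlt : l * t = a * b := mul_inv_cancel_left _ _
  have key : -a + a * (b * c) = l * (-t + t * c) := by
    have h₁ := SkewBrace.lambda_mul h l t c
    rw [hlt] at h₁
    calc -a + a * (b * c) = l + (-(a * b) + a * b * c) := by
          rw [hl, add_assoc, add_neg_cancel_left, mul_assoc]
      _ = l * (-t + t * c) := by rw [h₁, add_neg_cancel_left]
  rw [key, mul_inv_rev, mul_assoc, ← mul_assoc a b c, ← hlt]
  simp only [mul_assoc, inv_mul_cancel_left]

theorem SkewBrace.tau_one (h : ∀ a b c : G, a * (b + c) = a * b + (-a + a * c)) (a : G) :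
    (-a + a * 1)⁻¹ * (a * 1) = a := by
  rw [mul_one, neg_add_cancel, ← SkewBrace.one_eq_zero h, inv_one, one_mul]

end SkewBrace

open Algebra.TensorProduct in
theorem mul'_map_eq_lift {k M N R : Type*} [Field k] [CommRing M] [Algebra k M] [CommRing N]
    [Algebra k N] [CommRing R] [Algebra k R] (f : M →ₐ[k] R) (g : N →ₐ[k] R) (x : M ⊗[k] N) :
    LinearMap.mul' k R (TensorProduct.map f.toLinearMap g.toLinearMap x) =
      lift f g (fun _ _ ↦ .all _ _) x := by
  induction x with
  | zero => simp
  | tmul a b => simp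
  | add a b ha hb => simp only [map_add, ha, hb]

theorem isAlgebraMorphism_toLinearMap {k M N : Type*} [Field k] [Ring M] [Algebra k M] [Ring N]
    [Algebra k N] (f : M →ₐ[k] N) : IsAlgebraMorphism k M N f.toLinearMap :=
  ⟨map_mul f, map_one f⟩

namespace HopfStruct

variable {k A : Type*} [Field k] [CommRing A] [Algebra k A] (H : HopfStruct k A)

/-- The Mathlib Hopf algebra given by a `HopfStruct`. -/
@[reducible]
def toHopfAlgebra : HopfAlgebra k A :=
  letI : Coalgebra k A :=
    { comul := H.Δ
      counit := H.ε
      coassoc := LinearMap.ext fun a ↦ (H.coassoc a).symm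
      rTensor_counit_comp_comul := LinearMap.ext fun a ↦
        (TensorProduct.lid k A).injective ((H.counit_left a).trans (by simp))
      lTensor_counit_comp_comul := LinearMap.ext fun a ↦
        (TensorProduct.rid k A).injective ((H.counit_right a).trans (by simp)) }
  letI : Bialgebra k A := Bialgebra.mk' k A H.counit_one (H.counit_mul _ _) H.comul_one
    (H.comul_mul _ _)
  { antipode := H.S
    mul_antipode_rTensor_comul := LinearMap.ext H.antipode_left
    mul_antipode_lTensor_comul := LinearMap.ext H.antipode_right }

/-- The comultiplication as an algebra homomorphism. -/
def comulHom : A →ₐ[k] A ⊗[k] A := .ofLinearMap H.Δ H.comul_one H.comul_mul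

/-- The counit as an algebra homomorphism. -/
def counitHom : A →ₐ[k] k := .ofLinearMap H.ε H.counit_one H.counit_mul

/-- The antipode of a commutative Hopf algebra as an algebra homomorphism. -/
def antipodeHom : A →ₐ[k] A :=
  .ofLinearMap H.S
    (@HopfAlgebra.antipode_one k A _ _ H.toHopfAlgebra)
    (@HopfAlgebra.antipode_mul_distrib k A _ _ H.toHopfAlgebra)

section Points

variable {R R' : Type*} [CommRing R] [Algebra k R] [CommRing R'] [Algebra k R']

/-- The convolution product of `R`-valued points. -/
def conv (f g : A →ₐ[k] R) : A →ₐ[k] R :=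
  (Algebra.TensorProduct.lift f g (fun _ _ ↦ .all _ _)).comp H.comulHom

/-- The convolution unit among `R`-valued points. -/
def convOne : A →ₐ[k] R := (Algebra.ofId k R).comp H.counitHom

/-- The convolution inverse of an `R`-valued point. -/
def convInv (f : A →ₐ[k] R) : A →ₐ[k] R := f.comp H.antipodeHom

theorem conv_apply (f g : A →ₐ[k] R) (a : A) :
    H.conv f g a = LinearMap.mul' k R (TensorProduct.map f.toLinearMap g.toLinearMap (H.Δ a)) :=
  (mul'_map_eq_lift f g (H.Δ a)).symm

theorem comp_conv (h : R →ₐ[k] R') (f g : A →ₐ[k] R) :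
    h.comp (H.conv f g) = H.conv (h.comp f) (h.comp g) := by
  rw [conv, conv, ← AlgHom.comp_assoc]
  congr 1
  ext <;> simp

theorem comp_convInv (h : R →ₐ[k] R') (f : A →ₐ[k] R) :
    h.comp (H.convInv f) = H.convInv (h.comp f) := rfl

theorem conv_assoc_s7 (f g h : A →ₐ[k] R) :
    H.conv (H.conv f g) h = H.conv f (H.conv g h) := by
  ext a
  have key := congrArg (Algebra.TensorProduct.lift f
    (Algebra.TensorProduct.lift g h (fun _ _ ↦ .all _ _)) (fun _ _ ↦ .all _ _)) (H.coassoc a)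
  refine Eq.trans ?_ (key.symm.trans ?_)
  · change Algebra.TensorProduct.lift (H.conv f g) h (fun _ _ ↦ .all _ _) (H.Δ a) = _
    induction H.Δ a with
    | zero => simp
    | add x y hx hy => simp only [map_add, hx, hy]
    | tmul x y =>
      simp only [Algebra.TensorProduct.lift_tmul, TensorProduct.map_tmul, LinearMap.id_apply]
      change Algebra.TensorProduct.lift f g (fun _ _ ↦ .all _ _) (H.Δ x) * _ = _
      induction H.Δ x with
      | zero => simp
      | add u v hu hv => simp only [map_add, add_mul, TensorProduct.add_tmul, hu, hv]
      | tmul u v => simp [mul_assoc]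
  · change _ = Algebra.TensorProduct.lift f (H.conv g h) (fun _ _ ↦ .all _ _) (H.Δ a)
    induction H.Δ a with
    | zero => simp
    | add x y hx hy => simp only [map_add, hx, hy]
    | tmul x y => simp [conv, comulHom]

theorem one_conv (f : A →ₐ[k] R) : H.conv H.convOne f = f := by
  ext a
  refine Eq.trans ?_ (congrArg f (H.counit_left a))
  change Algebra.TensorProduct.lift _ f (fun _ _ ↦ .all _ _) (H.Δ a) = _
  induction H.Δ a with
  | zero => simp
  | add x y hx hy => simp only [map_add, hx, hy]
  | tmul x y => simp [convOne, counitHom, Algebra.ofId_apply, Algebra.smul_def]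

theorem convInv_conv (f : A →ₐ[k] R) : H.conv (H.convInv f) f = H.convOne := by
  ext a
  refine Eq.trans ?_ ((congrArg f (H.antipode_left a)).trans (f.commutes _))
  change Algebra.TensorProduct.lift _ f (fun _ _ ↦ .all _ _) (H.Δ a) = _
  induction H.Δ a with
  | zero => simp
  | add x y hx hy => simp only [map_add, hx, hy]
  | tmul x y => simp [convInv, antipodeHom]

variable (R) in
/-- The convolution group of `R`-valued points. -/
@[reducible]
def pointGroup : Group (A →ₐ[k] R) :=
  letI : Mul (A →ₐ[k] R) := ⟨H.conv⟩
  letI : One (A →ₐ[k] R) := ⟨H.convOne⟩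
  letI : Inv (A →ₐ[k] R) := ⟨H.convInv⟩
  Group.ofLeftAxioms H.conv_assoc_s7 H.one_conv H.convInv_conv

variable (R) in
/-- The convolution group of `R`-valued points, written additively. -/
@[reducible]
def pointAddGroup : AddGroup (A →ₐ[k] R) :=
  @Additive.addGroup (A →ₐ[k] R) (H.pointGroup R)

end Points

theorem conv_includeLeft_includeRight :
    H.conv Algebra.TensorProduct.includeLeft Algebra.TensorProduct.includeRight = H.comulHom := by
  rw [conv, show Algebra.TensorProduct.lift _ _ _ = AlgHom.id k (A ⊗[k] A) by ext <;> simp,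
    AlgHom.id_comp]

end HopfStruct

namespace HopfBrace

open Algebra.TensorProduct

variable {k A : Type*} [Field k] [CommRing A] [Algebra k A] (HB : HopfBrace k A)
variable {R R' : Type*} [CommRing R] [Algebra k R] [CommRing R'] [Algebra k R']

theorem compat_includes :
    HB.snd.conv (includeLeft : A →ₐ[k] A ⊗[k] (A ⊗[k] A))
        (HB.fst.conv (includeRight.comp includeLeft) (includeRight.comp includeRight)) =
      HB.fst.conv (HB.snd.conv includeLeft (includeRight.comp includeLeft))
        (HB.fst.conv (HB.fst.convInv includeLeft)
          (HB.snd.conv includeLeft (includeRight.comp includeRight))) := by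
  have hP : HB.snd.conv (includeLeft : A →ₐ[k] A ⊗[k] (A ⊗[k] A)) (includeRight.comp includeLeft) =
      (Algebra.TensorProduct.map (AlgHom.id k A) includeLeft).comp HB.snd.comulHom := by
    rw [← HB.snd.conv_includeLeft_includeRight, HB.snd.comp_conv]
    congr 1
  have hQ : HB.snd.conv (includeLeft : A →ₐ[k] A ⊗[k] (A ⊗[k] A)) (includeRight.comp includeRight) =
      (Algebra.TensorProduct.map (AlgHom.id k A) includeRight).comp HB.snd.comulHom := by
    rw [← HB.snd.conv_includeLeft_includeRight, HB.snd.comp_conv]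
    congr 1
  have hL : HB.snd.conv (includeLeft : A →ₐ[k] A ⊗[k] (A ⊗[k] A))
        (HB.fst.conv (includeRight.comp includeLeft) (includeRight.comp includeRight)) =
      (Algebra.TensorProduct.map (AlgHom.id k A) HB.fst.comulHom).comp HB.snd.comulHom := by
    rw [← HB.snd.conv_includeLeft_includeRight, HB.snd.comp_conv, ← HB.fst.comp_conv,
      HB.fst.conv_includeLeft_includeRight]
    congr 1
    ext; simp
  rw [hL, hP, hQ]
  ext a
  refine (HB.compat a).trans ?_
  rw [HopfStruct.conv_apply]
  simp only [braceRHS, mul₃, LinearMap.comp_apply]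
  induction HB.fst.Δ a with
  | zero => simp
  | add x y hx hy => simp only [map_add, hx, hy]
  | tmul x y =>
    simp only [TensorProduct.map_tmul, LinearMap.mul'_apply, AlgHom.toLinearMap_apply,
      HopfStruct.conv_apply, LinearMap.id_apply]
    rfl

/-- The points of a commutative Hopf brace form a skew brace. -/
theorem compat_points (f g h : A →ₐ[k] R) :
    HB.snd.conv f (HB.fst.conv g h) =
      HB.fst.conv (HB.snd.conv f g) (HB.fst.conv (HB.fst.convInv f) (HB.snd.conv f h)) := by
  have key := congrArg (lift f (lift g h (fun _ _ ↦ .all _ _)) (fun _ _ ↦ .all _ _)).comp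
    HB.compat_includes
  simpa only [HopfStruct.comp_conv, HopfStruct.comp_convInv, ← AlgHom.comp_assoc,
    lift_comp_includeLeft, lift_comp_includeRight'] using key

/-- The map `(f, g) ↦ λ_f(g)` on points. -/
def lam (f g : A →ₐ[k] R) : A →ₐ[k] R :=
  HB.fst.conv (HB.fst.convInv f) (HB.snd.conv f g)

/-- The map `(f, g) ↦ λ_f(g)⁻¹ f g` on points. -/
def tau (f g : A →ₐ[k] R) : A →ₐ[k] R :=
  HB.snd.conv (HB.snd.convInv (HB.lam f g)) (HB.snd.conv f g)

theorem comp_tau (h : R →ₐ[k] R') (f g : A →ₐ[k] R) :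
    h.comp (HB.tau f g) = HB.tau (h.comp f) (h.comp g) := by
  simp only [tau, lam, HopfStruct.comp_conv, HopfStruct.comp_convInv]

theorem tau_conv (f g h : A →ₐ[k] R) :
    HB.tau f (HB.snd.conv g h) = HB.tau (HB.tau f g) h :=
  letI := HB.snd.pointGroup R
  letI := HB.fst.pointAddGroup R
  SkewBrace.tau_mul HB.compat_points f g h

theorem tau_one (f : A →ₐ[k] R) : HB.tau f HB.snd.convOne = f :=
  letI := HB.snd.pointGroup R
  letI := HB.fst.pointAddGroup R
  SkewBrace.tau_one HB.compat_points f

theorem ρmap_eq :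
    ρmap k A HB.fst.Δ HB.snd.Δ HB.fst.S =
      (HB.lam includeLeft (includeRight : A →ₐ[k] A ⊗[k] A)).toLinearMap := by
  ext a
  rw [AlgHom.toLinearMap_apply, lam, HB.snd.conv_includeLeft_includeRight, HopfStruct.conv_apply]
  rfl

theorem φmap_eq :
    φmap k A HB.fst.Δ HB.snd.Δ HB.fst.S HB.snd.S =
      (HB.tau includeLeft (includeRight : A →ₐ[k] A ⊗[k] A)).toLinearMap := by
  ext a
  rw [AlgHom.toLinearMap_apply, tau, HB.snd.conv_includeLeft_includeRight, HopfStruct.conv_apply,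
    φmap, ρmap_eq, ← LinearMap.comp_assoc HB.snd.Δ, ← TensorProduct.map_comp,
    LinearMap.comp_id, LinearMap.id_comp]
  rfl

theorem rightCoaction_φmap :
    RightCoaction k A A HB.snd.Δ HB.snd.ε
      (φmap k A HB.fst.Δ HB.snd.Δ HB.fst.S HB.snd.S) := by
  rw [φmap_eq]
  set φ := HB.tau includeLeft (includeRight : A →ₐ[k] A ⊗[k] A) with hφ
  constructor
  · have key : (Algebra.TensorProduct.map (AlgHom.id k A) HB.snd.comulHom).comp φ =
        ((Algebra.TensorProduct.assoc k k k A A A).toAlgHom.comp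
          (Algebra.TensorProduct.map φ (AlgHom.id k A))).comp φ := by
      have h₁ : (Algebra.TensorProduct.map (AlgHom.id k A) HB.snd.comulHom).comp includeRight =
          HB.snd.conv ((includeRight : A ⊗[k] A →ₐ[k] A ⊗[k] (A ⊗[k] A)).comp includeLeft)
            (includeRight.comp includeRight) := by
        rw [← HB.snd.comp_conv, HB.snd.conv_includeLeft_includeRight]
        ext; simp
      have h₂ : ((Algebra.TensorProduct.assoc k k k A A A).toAlgHom.comp
          (Algebra.TensorProduct.map φ (AlgHom.id k A))).comp includeLeft =
          HB.tau includeLeft (includeRight.comp includeLeft) := by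
        have : ((Algebra.TensorProduct.assoc k k k A A A).toAlgHom.comp
            (Algebra.TensorProduct.map φ (AlgHom.id k A))).comp includeLeft =
            ((Algebra.TensorProduct.assoc k k k A A A).toAlgHom.comp includeLeft).comp φ := by
          ext; simp
        rw [this, hφ, comp_tau]
        congr 1
      have h₃ : ((Algebra.TensorProduct.assoc k k k A A A).toAlgHom.comp
          (Algebra.TensorProduct.map φ (AlgHom.id k A))).comp includeRight =
          includeRight.comp includeRight := by
        ext; simp [one_def]
      conv_lhs => rw [hφ, comp_tau, h₁]
      conv_rhs => rhs; rw [hφ]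
      rw [comp_tau, h₂, h₃, ← tau_conv]
      congr 1
      ext; simp
    exact fun a ↦ DFunLike.congr_fun key a
  · have key : ((Algebra.TensorProduct.rid k k A).toAlgHom.comp
        (Algebra.TensorProduct.map (AlgHom.id k A) HB.snd.counitHom)).comp φ = AlgHom.id k A := by
      rw [hφ, comp_tau]
      convert HB.tau_one (AlgHom.id k A) using 2
      · ext; simp
      · ext; simp [HopfStruct.convOne, Algebra.ofId_apply, Algebra.smul_def]
    exact fun a ↦ DFunLike.congr_fun key a

theorem isAlgebraMorphism_φmap :
    IsAlgebraMorphism k A (A ⊗[k] A) (φmap k A HB.fst.Δ HB.snd.Δ HB.fst.S HB.snd.S) := by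
  rw [φmap_eq]
  exact isAlgebraMorphism_toLinearMap _

end HopfBrace

/-- Lemma 2.8(2).  Let `(A, Δ, Δ')` be a commutative Hopf
brace with antipodes `S` (for `Δ`) and `T` (for `Δ'`), and
`ρ(a) = a_{(-1)} ⊗ a_{(0)} = S(a_1) a_{21'} ⊗ a_{22'}`.  Then
`φ(a) = (T(a_{1'}))_{(-1)} a_{2'} ⊗ (T(a_{1'}))_{(0)} a_{3'}` makes `A` a right
comodule algebra over `(A, Δ')`: `(φ ⊗ id)φ = (id ⊗ Δ')φ`, `(id ⊗ ε)φ = id`,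
and `φ` is an algebra homomorphism. -/
theorem lemma_2_8_2 {k : Type*} [Field k] {A : Type*} [Ring A] [Algebra k A]
    (HB : HopfBrace k A) (hcomm : ∀ x y : A, x * y = y * x) :
    RightCoaction k A A HB.snd.Δ HB.snd.ε
        (φmap k A HB.fst.Δ HB.snd.Δ HB.fst.S HB.snd.S) ∧
    IsAlgebraMorphism k A (A ⊗[k] A)
        (φmap k A HB.fst.Δ HB.snd.Δ HB.fst.S HB.snd.S) := by
  let _ : CommRing A := { ‹Ring A› with mul_comm := hcomm }
  exact ⟨HB.rightCoaction_φmap, HB.isAlgebraMorphism_φmap⟩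

end HopfPaper
end
end

section
/- Let (A, Δ', ε) be a commutative Hopf algebra over a field k with antipode T, and suppose (A, A) is a Hopf matched pair (with both Hopf algebra structures given by Δ') with coactions ρ(a) = a_{(-1)} ⊗ a_{(0)} and φ(a) = a_{[0]} ⊗ a_{[1]}, such that a_{1'} ⊗ a_{2'} = a_{1'(-1)} a_{2'[0]} ⊗ a_{1'(0)} a_{2'[1]} for all a ∈ A. Define Δ(a) = a_{1'} T(a_{2'(-1)}) ⊗ a_{2'(0)} and S(a) = a_{(-1)} T(a_{(0)}). Then (A, m, 1, Δ, ε, S) is a Hopf algebra and (A, Δ, Δ') is a commutative Hopf brace. -/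
open TensorProduct

noncomputable section

namespace HopfPaper

variable (k : Type*) [Field k]

section GroupTheory

/-- Maps `l` and `r` making `(G, G)` a matched pair of groups whose multiplication is braided
commutative: `x * y = l x y * r x y`. Only the laws needed for skew braces are recorded. -/
structure IsBraidedPair {G : Type*} [Group G] (l r : G → G → G) : Prop where
  one_left : ∀ x, l 1 x = x
  left_one : ∀ x, l x 1 = 1
  mul_left : ∀ x y z, l (x * y) z = l x (l y z)
  left_mul : ∀ x y z, l x (y * z) = l x y * l (r x y) z
  braided : ∀ x y, x * y = l x y * r x y

/-- The second product `x ∘ y = x * l x⁻¹ y` attached to a left action `l` of `G` on itself. -/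
def circ {G : Type*} [Group G] (l : G → G → G) (x y : G) : G := x * l x⁻¹ y

namespace IsBraidedPair

variable {G : Type*} [Group G] {l r : G → G → G} (h : IsBraidedPair l r)
include h

lemma left_inv_left (x y : G) : l x⁻¹ (l x y) = y := by
  rw [← h.mul_left, inv_mul_cancel, h.one_left]

lemma one_circ (x : G) : circ l 1 x = x := by
  simp [circ, h.one_left]

lemma circ_one (x : G) : circ l x 1 = x := by
  simp [circ, h.left_one]

lemma circ_left (x y : G) : circ l x (l x y) = x * y := by
  rw [circ, h.left_inv_left]

lemma circ_assoc (x y z : G) : circ l (circ l x y) z = circ l x (circ l y z) := by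
  have hr : r x⁻¹ y * y⁻¹ = (x * l x⁻¹ y)⁻¹ := by
    rw [mul_inv_rev, eq_inv_mul_iff_mul_eq, ← mul_assoc, ← h.braided, mul_assoc, mul_inv_cancel,
      mul_one]
  simp only [circ]
  rw [h.left_mul, ← h.mul_left, hr, mul_assoc]

lemma circ_inv (x : G) : circ l x (l x x⁻¹) = 1 := by
  rw [h.circ_left, mul_inv_cancel]

lemma inv_circ (x : G) : circ l (l x x⁻¹) x = 1 := by
  have key := h.circ_inv (l x x⁻¹)
  generalize l (l x x⁻¹) (l x x⁻¹)⁻¹ = w at key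
  have hw : x = w := by
    rw [← h.circ_one x, ← key, ← h.circ_assoc, h.circ_inv, h.one_circ]
  rwa [← hw] at key

lemma left_circ (x y z : G) : l x (circ l y z) = circ l (l x y) (l x z) := by
  have hr : r x y * y⁻¹ = (l x y)⁻¹ * x := by
    rw [eq_inv_mul_iff_mul_eq, ← mul_assoc, ← h.braided, mul_inv_cancel_right]
  simp only [circ]
  rw [h.left_mul, ← h.mul_left, hr, h.mul_left]

lemma mul_circ (x y z : G) :
    x * circ l y z = circ l (x * y) (circ l (l x x⁻¹) (x * z)) := by
  rw [← h.circ_left x z, ← h.circ_assoc (l x x⁻¹), h.inv_circ, h.one_circ, ← h.circ_left,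
    h.left_circ, ← h.circ_assoc, h.circ_left]

end IsBraidedPair

end GroupTheory

section Points

open Algebra.TensorProduct (productMap)

variable {k}
variable {A M N P R : Type*} [CommRing R] [Algebra k R] [Ring A] [Algebra k A]
  [Ring M] [Algebra k M] [Ring N] [Algebra k N] [Ring P] [Algebra k P]

lemma productMap_map {A' : Type*} [Ring A'] [Algebra k A'] {p : M →ₐ[k] R} {q : N →ₐ[k] R}
    {f : A →ₗ[k] M} {g : A' →ₗ[k] N} {x : A →ₐ[k] R} {y : A' →ₐ[k] R}
    (hf : ∀ a, p (f a) = x a) (hg : ∀ a, q (g a) = y a) (t : A ⊗[k] A') :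
    productMap p q (TensorProduct.map f g t) = productMap x y t := by
  induction t with
  | zero => simp
  | tmul a b => simp [hf, hg]
  | add s t hs ht => simp only [map_add, hs, ht]

lemma apply_mul'_map {A' : Type*} [Ring A'] [Algebra k A'] {p : M →ₐ[k] R}
    {f : A →ₗ[k] M} {g : A' →ₗ[k] M} {x : A →ₐ[k] R} {y : A' →ₐ[k] R}
    (hf : ∀ a, p (f a) = x a) (hg : ∀ a, p (g a) = y a) (t : A ⊗[k] A') :
    p (LinearMap.mul' k M (TensorProduct.map f g t)) = productMap x y t := by
  induction t with
  | zero => simp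
  | tmul a b => simp [hf, hg]
  | add s t hs ht => simp only [map_add, hs, ht]

lemma apply_mul₃ (p : M →ₐ[k] R) (t : M ⊗[k] (M ⊗[k] M)) :
    p (mul₃ k M t) = productMap p (productMap p p) t := by
  refine apply_mul'_map (fun _ ↦ rfl) (fun s ↦ ?_) t
  simpa using apply_mul'_map (f := LinearMap.id) (g := LinearMap.id) (p := p)
    (fun _ ↦ rfl) (fun _ ↦ rfl) s

lemma productMap_assoc (x : M →ₐ[k] R) (y : N →ₐ[k] R) (z : P →ₐ[k] R)
    (t : (M ⊗[k] N) ⊗[k] P) :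
    productMap x (productMap y z) (TensorProduct.assoc k M N P t) =
      productMap (productMap x y) z t :=
  DFunLike.congr_fun (f := (productMap x (productMap y z)).comp
      (Algebra.TensorProduct.assoc k k k M N P).toAlgHom)
    (g := productMap (productMap x y) z)
    (by ext <;> simp [Algebra.TensorProduct.one_def]) t

lemma apply_lid_map {ε : M →ₗ[k] k} {x : N →ₐ[k] R} {e : M →ₐ[k] R}
    (he : ∀ a, algebraMap k R (ε a) = e a) (t : M ⊗[k] N) :
    x (TensorProduct.lid k N (TensorProduct.map ε LinearMap.id t)) = productMap e x t := by
  induction t with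
  | zero => simp
  | tmul a b => simp [← he, Algebra.smul_def]
  | add s t hs ht => simp only [map_add, hs, ht]

lemma apply_rid_map {ε : N →ₗ[k] k} {x : M →ₐ[k] R} {e : N →ₐ[k] R}
    (he : ∀ a, algebraMap k R (ε a) = e a) (t : M ⊗[k] N) :
    x (TensorProduct.rid k M (TensorProduct.map LinearMap.id ε t)) = productMap x e t := by
  induction t with
  | zero => simp
  | tmul a b => simp [← he, Algebra.smul_def, mul_comm]
  | add s t hs ht => simp only [map_add, hs, ht]

lemma productMap_ι₁ (x : M →ₐ[k] R) (y : N →ₐ[k] R) (m : M) :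
    productMap x y (ι₁ k M N m) = x m := by
  simp [ι₁]

lemma productMap_ι₂ (x : M →ₐ[k] R) (y : N →ₐ[k] R) (n : N) :
    productMap x y (ι₂ k M N n) = y n := by
  simp [ι₂]

end Points

section SeparatingPoints

open Algebra.TensorProduct (productMap)

universe u

variable {k}
variable {A : Type u} [CommRing A] [Algebra k A]

lemma tensor_ext_of_points {s t : A ⊗[k] A}
    (h : ∀ (R : Type u) [CommRing R] [Algebra k R] (x y : A →ₐ[k] R),
      productMap x y s = productMap x y t) : s = t := by
  have hid : productMap Algebra.TensorProduct.includeLeft Algebra.TensorProduct.includeRight =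
      AlgHom.id k (A ⊗[k] A) := by ext <;> simp
  simpa [hid] using h (A ⊗[k] A) Algebra.TensorProduct.includeLeft
    Algebra.TensorProduct.includeRight

lemma tensor_tensor_ext_of_points {s t : A ⊗[k] (A ⊗[k] A)}
    (h : ∀ (R : Type u) [CommRing R] [Algebra k R] (x y z : A →ₐ[k] R),
      productMap x (productMap y z) s = productMap x (productMap y z) t) : s = t := by
  let i : A ⊗[k] A →ₐ[k] A ⊗[k] (A ⊗[k] A) := Algebra.TensorProduct.includeRight
  have hid : productMap Algebra.TensorProduct.includeLeft
      (productMap (i.comp Algebra.TensorProduct.includeLeft)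
        (i.comp Algebra.TensorProduct.includeRight)) =
      AlgHom.id k (A ⊗[k] (A ⊗[k] A)) := by ext <;> simp [i]
  simpa [hid] using h (A ⊗[k] (A ⊗[k] A)) Algebra.TensorProduct.includeLeft
    (i.comp Algebra.TensorProduct.includeLeft) (i.comp Algebra.TensorProduct.includeRight)

end SeparatingPoints

section HopfAlgebraPoints

open Algebra.TensorProduct (productMap)
open WithConv Coalgebra

universe u

variable {k}
variable {A : Type u} [CommRing A] [HopfAlgebra k A]
variable {R : Type*} [CommRing R] [Algebra k R]

/-- The operation on the group of `R`-points of `A` induced by an algebra map `A → A ⊗ A`. -/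
def pointOp (δ : A →ₐ[k] A ⊗[k] A) (x y : WithConv (A →ₐ[k] R)) : WithConv (A →ₐ[k] R) :=
  toConv ((productMap x.ofConv y.ofConv).comp δ)

lemma point_mul_apply (x y : WithConv (A →ₐ[k] R)) (a : A) :
    (x * y) a = productMap x.ofConv y.ofConv (comul (R := k) a) :=
  AlgHom.convMul_apply x y a

/-- Mathlib's `AlgHom.convGroup` needs a bialgebra structure on the target. -/
instance pointGroup : Group (WithConv (A →ₐ[k] R)) where
  inv x := toConv (x.ofConv.comp (HopfAlgebra.antipodeAlgHom k A))
  inv_mul_cancel x := WithConv.ext <| AlgHom.ext fun a ↦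
    (point_mul_apply _ x a).trans <|
      (apply_mul'_map (p := x.ofConv) (f := HopfAlgebra.antipode k) (g := LinearMap.id)
        (fun _ ↦ rfl) (fun _ ↦ rfl) (comul (R := k) a)).symm.trans <|
      (congrArg x.ofConv
        (LinearMap.congr_fun HopfAlgebra.mul_antipode_rTensor_comul a)).trans
      (x.ofConv.commutes _)

lemma point_ext {x y : WithConv (A →ₐ[k] R)} (h : ∀ a, x a = y a) : x = y :=
  WithConv.ext (AlgHom.ext h)

variable {ρ φ : A →ₐ[k] A ⊗[k] A}

lemma isBraidedPair_pointOp
    (hmp : IsHopfMatchedPair k A A (comul (R := k)) (counit (R := k)) (comul (R := k))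
      (counit (R := k)) ρ.toLinearMap φ.toLinearMap)
    (h31 : ∀ a : A, comul (R := k) a = LinearMap.mul' k (A ⊗[k] A)
      (TensorProduct.map ρ.toLinearMap φ.toLinearMap (comul (R := k) a))) :
    IsBraidedPair (G := WithConv (A →ₐ[k] R)) (pointOp ρ) (pointOp φ) := by
  obtain ⟨⟨hρ_assoc, hρ_counit⟩, -, -, -, hρ_one, -, hρ_comul, -, -⟩ := hmp
  refine ⟨fun x ↦ point_ext fun a ↦ ?_, fun x ↦ point_ext fun a ↦ ?_,
    fun x y z ↦ point_ext fun a ↦ ?_, fun x y z ↦ point_ext fun a ↦ ?_,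
    fun x y ↦ point_ext fun a ↦ ?_⟩
  · have := congrArg x.ofConv (hρ_counit a)
    rwa [apply_lid_map (e := (1 : WithConv (A →ₐ[k] R)).ofConv) (fun _ ↦ rfl)] at this
  · have := congrArg x.ofConv (hρ_one a)
    rw [apply_rid_map (e := (1 : WithConv (A →ₐ[k] R)).ofConv) (fun _ ↦ rfl)] at this
    exact this.trans (AlgHom.commutes _ _)
  · have := congrArg (productMap x.ofConv (productMap y.ofConv z.ofConv)) (hρ_assoc a)
    rw [productMap_assoc, productMap_map (x := x.ofConv) (y := (pointOp ρ y z).ofConv)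
      (fun _ ↦ rfl) (fun _ ↦ rfl), productMap_map (x := (x * y).ofConv) (y := z.ofConv)
      (fun b ↦ (point_mul_apply x y b).symm) (fun _ ↦ rfl)] at this
    exact this.symm
  · have := congrArg (productMap x.ofConv (productMap y.ofConv z.ofConv)) (hρ_comul a)
    rw [productMap_map (x := x.ofConv) (y := (y * z).ofConv)
      (fun _ ↦ rfl) (fun b ↦ (point_mul_apply y z b).symm)] at this
    refine this.trans (Eq.trans ?_ (point_mul_apply _ _ _).symm)
    refine apply_mul'_map (fun b ↦ ?_) (fun b ↦ ?_) _
    · exact productMap_map (fun _ ↦ rfl) (productMap_ι₁ _ _) _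
    · refine (productMap_assoc _ _ _ _).trans ?_
      exact productMap_map (x := (pointOp φ x y).ofConv) (fun _ ↦ rfl) (fun _ ↦ rfl) _
  · rw [point_mul_apply, h31, point_mul_apply]
    exact apply_mul'_map (fun _ ↦ rfl) (fun _ ↦ rfl) _

lemma productMap_Δfromρ (x y : WithConv (A →ₐ[k] R)) (a : A) :
    productMap x.ofConv y.ofConv
      (Δfromρ k A (comul (R := k)) (HopfAlgebra.antipode k) ρ.toLinearMap a) =
      (circ (pointOp ρ) x y) a := by
  rw [circ, point_mul_apply]
  refine apply_mul'_map (productMap_ι₁ _ _) (fun b ↦ ?_) _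
  exact productMap_map (x := x⁻¹.ofConv) (fun _ ↦ rfl) (fun _ ↦ rfl) _

lemma apply_Sfromρ (x : WithConv (A →ₐ[k] R)) (a : A) :
    x (Sfromρ k A (HopfAlgebra.antipode k) ρ.toLinearMap a) = (pointOp ρ x x⁻¹) a :=
  apply_mul'_map (y := x⁻¹.ofConv) (fun _ ↦ rfl) (fun _ ↦ rfl) _

section BraceStructure

variable (hp : ∀ (R : Type u) [CommRing R] [Algebra k R],
  IsBraidedPair (G := WithConv (A →ₐ[k] R)) (pointOp ρ) (pointOp φ))

/-- The Hopf algebra structure with comultiplication `Δfromρ` and antipode `Sfromρ`, for a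
coaction `ρ` inducing braided pairs on points. -/
def hopfStructOfCoaction : HopfStruct k A where
  Δ := Δfromρ k A (comul (R := k)) (HopfAlgebra.antipode k) ρ.toLinearMap
  ε := counit (R := k)
  S := Sfromρ k A (HopfAlgebra.antipode k) ρ.toLinearMap
  coassoc h := tensor_tensor_ext_of_points fun R _ _ x y z ↦ by
    rw [productMap_assoc,
      productMap_map (x := x) (y := (circ (pointOp ρ) (toConv y) (toConv z)).ofConv)
        (fun _ ↦ rfl) (productMap_Δfromρ (toConv y) (toConv z)),
      productMap_map (x := (circ (pointOp ρ) (toConv x) (toConv y)).ofConv) (y := z)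
        (productMap_Δfromρ (toConv x) (toConv y)) (fun _ ↦ rfl)]
    have := (hp R).circ_assoc (toConv x) (toConv y) (toConv z)
    exact (productMap_Δfromρ (toConv x) _ h).trans
      ((congrArg (fun w ↦ w.ofConv h) this.symm).trans (productMap_Δfromρ _ (toConv z) h).symm)
  counit_left h := by
    have := apply_lid_map (x := AlgHom.id k A) (e := (1 : WithConv (A →ₐ[k] A)).ofConv)
      (ε := counit (R := k)) (fun _ ↦ rfl)
      (Δfromρ k A (comul (R := k)) (HopfAlgebra.antipode k) ρ.toLinearMap h)
    refine this.trans ((productMap_Δfromρ 1 (toConv (AlgHom.id k A)) h).trans ?_)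
    rw [(hp A).one_circ]; rfl
  counit_right h := by
    have := apply_rid_map (x := AlgHom.id k A) (e := (1 : WithConv (A →ₐ[k] A)).ofConv)
      (ε := counit (R := k)) (fun _ ↦ rfl)
      (Δfromρ k A (comul (R := k)) (HopfAlgebra.antipode k) ρ.toLinearMap h)
    refine this.trans ((productMap_Δfromρ (toConv (AlgHom.id k A)) 1 h).trans ?_)
    rw [(hp A).circ_one]; rfl
  comul_mul a b := tensor_ext_of_points fun R _ _ x y ↦ by
    have := productMap_Δfromρ (ρ := ρ) (toConv x) (toConv y)
    exact (this _).trans <| (map_mul _ a b).trans <|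
      (congrArg₂ (· * ·) (this a) (this b)).symm.trans (map_mul (productMap x y) _ _).symm
  comul_one := tensor_ext_of_points fun R _ _ x y ↦ by
    have := productMap_Δfromρ (ρ := ρ) (toConv x) (toConv y)
    exact (this 1).trans ((map_one _).trans (map_one (productMap x y)).symm)
  counit_mul := Bialgebra.counit_mul
  counit_one := Bialgebra.counit_one
  antipode_left h := by
    let i : WithConv (A →ₐ[k] A) := toConv (AlgHom.id k A)
    refine (apply_mul'_map (p := i.ofConv) (x := (pointOp ρ i i⁻¹).ofConv) (y := i.ofConv)
      (apply_Sfromρ i) (fun _ ↦ rfl) _).trans ((productMap_Δfromρ _ i h).trans ?_)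
    rw [(hp A).inv_circ]; rfl
  antipode_right h := by
    let i : WithConv (A →ₐ[k] A) := toConv (AlgHom.id k A)
    refine (apply_mul'_map (p := i.ofConv) (y := (pointOp ρ i i⁻¹).ofConv) (x := i.ofConv)
      (fun _ ↦ rfl) (apply_Sfromρ i) _).trans ((productMap_Δfromρ i _ h).trans ?_)
    rw [(hp A).circ_inv]; rfl

include hp in
lemma braceLHS_eq_braceRHS (h : A) :
    braceLHS k A (Δfromρ k A (comul (R := k)) (HopfAlgebra.antipode k) ρ.toLinearMap)
        (comul (R := k)) h =
      braceRHS k A (Δfromρ k A (comul (R := k)) (HopfAlgebra.antipode k) ρ.toLinearMap)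
        (comul (R := k)) (Sfromρ k A (HopfAlgebra.antipode k) ρ.toLinearMap) h := by
  refine tensor_tensor_ext_of_points fun R _ _ x y z ↦ ?_
  let x' := toConv x
  let y' := toConv y
  let z' := toConv z
  have hleft : productMap x (productMap y z) (braceLHS k A
      (Δfromρ k A (comul (R := k)) (HopfAlgebra.antipode k) ρ.toLinearMap) (comul (R := k)) h) =
      (x' * circ (pointOp ρ) y' z') h :=
    (productMap_map (fun _ ↦ rfl) (productMap_Δfromρ y' z') _).trans
      (point_mul_apply x' _ h).symm
  rw [hleft, (hp R).mul_circ, ← productMap_Δfromρ]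
  refine ((apply_mul₃ _ _).trans ?_).symm
  refine (productMap_map (x := (x' * y').ofConv)
    (y := productMap (pointOp ρ x' x'⁻¹).ofConv (x' * z').ofConv) (fun b ↦ ?_)
    (fun s ↦ productMap_map (fun b ↦ ?_) (fun b ↦ ?_) s) _).trans ?_
  · exact (productMap_map (fun _ ↦ rfl) (productMap_ι₁ _ _) _).trans
      (point_mul_apply x' y' b).symm
  · exact (productMap_ι₁ _ _ _).trans (apply_Sfromρ x' b)
  · exact (productMap_map (fun _ ↦ rfl) (productMap_ι₂ _ _) _).trans
      (point_mul_apply x' z' b).symm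
  · exact productMap_map (fun _ ↦ rfl) (productMap_Δfromρ (pointOp ρ x' x'⁻¹) (x' * z')) _

end BraceStructure

end HopfAlgebraPoints

section

variable {k}

/-- The Mathlib Hopf algebra given by a `HopfStruct`. -/
abbrev HopfStruct.toHopfAlgebra_s15 {A : Type*} [CommRing A] [Algebra k A] (B : HopfStruct k A) :
    HopfAlgebra k A where
  comul := B.Δ
  counit := B.ε
  antipode := B.S
  coassoc := LinearMap.ext fun h ↦ (B.coassoc h).symm
  rTensor_counit_comp_comul := LinearMap.ext fun h ↦
    (TensorProduct.lid k A).injective ((B.counit_left h).trans (by simp))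
  lTensor_counit_comp_comul := LinearMap.ext fun h ↦
    (TensorProduct.rid k A).injective ((B.counit_right h).trans (by simp))
  counit_one := B.counit_one
  mul_compr₂_counit := by ext a b; exact B.counit_mul a b
  comul_one := B.comul_one
  mul_compr₂_comul := LinearMap.ext₂ B.comul_mul
  mul_antipode_rTensor_comul := LinearMap.ext B.antipode_left
  mul_antipode_lTensor_comul := LinearMap.ext B.antipode_right

lemma exists_hopfBrace_of_isHopfMatchedPair {A : Type*} [CommRing A] [Algebra k A]
    (B : HopfStruct k A) (ρ φ : A →ₗ[k] A ⊗[k] A)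
    (hmp : IsHopfMatchedPair k A A B.Δ B.ε B.Δ B.ε ρ φ)
    (h31 : ∀ a : A,
      B.Δ a = LinearMap.mul' k (A ⊗[k] A) (TensorProduct.map ρ φ (B.Δ a))) :
    ∃ hb : HopfBrace k A,
      hb.fst.Δ = Δfromρ k A B.Δ B.S ρ ∧
      hb.fst.ε = B.ε ∧
      hb.fst.S = Sfromρ k A B.S ρ ∧
      hb.snd = B := by
  obtain ⟨hρ_mul, hρ_one⟩ := hmp.2.1
  obtain ⟨hφ_mul, hφ_one⟩ := hmp.2.2.2.1
  let _ : HopfAlgebra k A := B.toHopfAlgebra_s15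
  let ρ' : A →ₐ[k] A ⊗[k] A := AlgHom.ofLinearMap ρ hρ_one hρ_mul
  let φ' : A →ₐ[k] A ⊗[k] A := AlgHom.ofLinearMap φ hφ_one hφ_mul
  have hp : ∀ (R : Type _) [CommRing R] [Algebra k R],
      IsBraidedPair (G := WithConv (A →ₐ[k] R)) (pointOp ρ') (pointOp φ') :=
    fun R _ _ ↦ isBraidedPair_pointOp hmp h31
  exact ⟨⟨hopfStructOfCoaction hp, B, braceLHS_eq_braceRHS hp⟩, rfl, rfl, rfl, rfl⟩

end

/-- Proposition 3.4.  Let `(A, Δ', ε)` be a commutative Hopf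
algebra with antipode `T`, and let `(A, A)` be a Hopf matched pair (both Hopf
algebra structures being `(A, Δ')`) with coactions `ρ` and `φ` such that (3.1):
`a_{1'} ⊗ a_{2'} = a_{1'(-1)} a_{2'[0]} ⊗ a_{1'(0)} a_{2'[1]}` for all `a`.
Define `Δ(a) = a_{1'} T(a_{2'(-1)}) ⊗ a_{2'(0)}` and `S(a) = a_{(-1)} T(a_{(0)})`.
Then `(A, m, 1, Δ, ε, S)` is a Hopf algebra and `(A, Δ, Δ')` is a commutative
Hopf brace. -/
theorem proposition_3_4 {k : Type*} [Field k] {A : Type*} [Ring A] [Algebra k A]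
    (B : HopfStruct k A) (hcomm : ∀ x y : A, x * y = y * x)
    (ρ φ : A →ₗ[k] A ⊗[k] A)
    (hmp : IsHopfMatchedPair k A A B.Δ B.ε B.Δ B.ε ρ φ)
    (h31 : ∀ a : A,
      B.Δ a = LinearMap.mul' k (A ⊗[k] A) (TensorProduct.map ρ φ (B.Δ a))) :
    ∃ hb : HopfBrace k A,
      hb.fst.Δ = Δfromρ k A B.Δ B.S ρ ∧
      hb.fst.ε = B.ε ∧
      hb.fst.S = Sfromρ k A B.S ρ ∧
      hb.snd = B := by
  let _ : CommRing A := { ‹Ring A› with mul_comm := hcomm }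
  exact exists_hopfBrace_of_isHopfMatchedPair B ρ φ hmp h31

end HopfPaper
end
end
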